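/- Let R¹, R², S¹, S² be finite nonempty posets such that R¹ and R² have disjoint carriers and S¹ and S² have disjoint carriers. If R¹ ⊑ S¹ and R² ⊑ S², then R¹ ⊕ R² ⊑ S¹ ⊕ S². -/

import Mathlib

/-!
A monotone map `f : P → A ⊕ₗ B` determines the lower set `L` of the points sent into `A`, together
with the monotone restrictions `L → A` and `Lᶜ → B`. Conversely, every lower set `L` and every pair
of monotone maps `L → A`, `Lᶜ → B` glue to a monotone map on `P`: a relation from `L` to `Lᶜ` is
respected since `A` lies below `B`, and there is no relation from `Lᶜ` to `L`. Hence
`#H(P, A ⊕ₗ B) = ∑ L, #H(L, A) * #H(Lᶜ, B)` (`card_hom_sumLex`), and the two hypotheses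
bound this sum term by term. A part `L` or `Lᶜ` may be empty, in which case both hom-sets are
singletons (`Sqsub.card_le`).
-/

/-- One zigzag step inside the subset `A`. -/
def ZigStep {P : Type} [PartialOrder P] (A : Set P) (a b : P) : Prop :=
  a ∈ A ∧ b ∈ A ∧ (a < b ∨ b < a)

/-- `gamma A x` is the set of points of `A` connected with `x` by a zigzag line inside `A`. -/
def gamma {P : Type} [PartialOrder P] (A : Set P) (x : P) : Set P :=
  {y | x ∈ A ∧ y ∈ A ∧ Relation.ReflTransGen (ZigStep A) x y}

/-- `Gmap ξ x = γ_{ξ⁻¹(ξ(x))}(x)`. -/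
def Gmap {P R : Type} [PartialOrder P] (ξ : P → R) (x : P) : Set P :=
  gamma (ξ ⁻¹' {ξ x}) x

/-- `R ⊑ S` : `#H(P,R) ≤ #H(P,S)` for every finite nonempty poset `P`. -/
def Sqsub (R S : Type) [PartialOrder R] [PartialOrder S] : Prop :=
  ∀ (P : Type) [PartialOrder P] [Finite P] [Nonempty P],
    Nat.card (P →o R) ≤ Nat.card (P →o S)

/-- `R ⊑_G S` : there is a strong G-scheme from `R` to `S`. -/
def SqsubG (R S : Type) [PartialOrder R] [PartialOrder S] : Prop :=
  ∃ ρ : ∀ (P : Type) [PartialOrder P] [Finite P] [Nonempty P], (P →o R) → (P →o S),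
    ∀ (P : Type) [PartialOrder P] [Finite P] [Nonempty P],
      Function.Injective (ρ P) ∧
      ∀ (ξ : P →o R) (x : P), Gmap (⇑(ρ P ξ)) x = Gmap (⇑ξ) x

/-- The lower set of the points that a monotone map into an ordinal sum sends to the lower
summand. -/
def leftPart {P A B : Type} [PartialOrder P] [PartialOrder A] [PartialOrder B]
    (f : P →o A ⊕ₗ B) : LowerSet P where
  carrier := {x | (ofLex (f x)).isLeft}
  lower' := by
    intro x y hyx hx
    have h := f.monotone hyx
    simp only [Set.mem_ofPred_eq] at hx ⊢
    rw [Sum.Lex.le_def] at h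
    revert h hx
    rcases ofLex (f x) with a | b <;> rcases ofLex (f y) with c | d <;> simp

theorem mem_leftPart {P A B : Type} [PartialOrder P] [PartialOrder A] [PartialOrder B]
    (f : P →o A ⊕ₗ B) (x : P) : x ∈ leftPart f ↔ (ofLex (f x)).isLeft := Iff.rfl

open Classical in
/-- The monotone map glued from monotone maps on a lower set and on its complement. -/
noncomputable def glue {P A B : Type} [PartialOrder P] [PartialOrder A] [PartialOrder B]
    (L : LowerSet P) (g : {x // x ∈ L} →o A) (h : {x // x ∉ L} →o B) : P →o A ⊕ₗ B where
  toFun x := if hx : x ∈ L then Sum.inlₗ (g ⟨x, hx⟩) else Sum.inrₗ (h ⟨x, hx⟩)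
  monotone' := by
    intro x y hxy
    by_cases hy : y ∈ L
    · have hx : x ∈ L := L.lower hxy hy
      simp only [hx, hy, dite_true]
      exact Sum.Lex.inl_le_inl_iff.2 (g.monotone hxy)
    · by_cases hx : x ∈ L
      · simp only [hx, hy, dite_true, dite_false]
        exact Sum.Lex.inl_le_inr _ _
      · simp only [hx, hy, dite_false]
        exact Sum.Lex.inr_le_inr_iff.2 (h.monotone hxy)

theorem glue_of_mem {P A B : Type} [PartialOrder P] [PartialOrder A] [PartialOrder B]
    (L : LowerSet P) (g : {x // x ∈ L} →o A) (h : {x // x ∉ L} →o B) {x : P} (hx : x ∈ L) :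
    glue L g h x = Sum.inlₗ (g ⟨x, hx⟩) := dif_pos hx

theorem glue_of_notMem {P A B : Type} [PartialOrder P] [PartialOrder A] [PartialOrder B]
    (L : LowerSet P) (g : {x // x ∈ L} →o A) (h : {x // x ∉ L} →o B) {x : P} (hx : x ∉ L) :
    glue L g h x = Sum.inrₗ (h ⟨x, hx⟩) := dif_neg hx

theorem leftPart_glue {P A B : Type} [PartialOrder P] [PartialOrder A] [PartialOrder B]
    (L : LowerSet P) (g : {x // x ∈ L} →o A) (h : {x // x ∉ L} →o B) :
    leftPart (glue L g h) = L := by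
  ext x
  change x ∈ leftPart (glue L g h) ↔ x ∈ L
  rw [mem_leftPart]
  by_cases hx : x ∈ L <;> simp [glue_of_mem, glue_of_notMem, hx, Sum.inlₗ, Sum.inrₗ]

/-- Gluing is a bijection onto the monotone maps whose left part is the given lower set. -/
theorem glue_bijective {P A B : Type} [PartialOrder P] [PartialOrder A] [PartialOrder B]
    (L : LowerSet P) :
    Function.Bijective (fun p : ({x // x ∈ L} →o A) × ({x // x ∉ L} →o B) =>
      (⟨glue L p.1 p.2, leftPart_glue L p.1 p.2⟩ : {f : P →o A ⊕ₗ B // leftPart f = L})) := by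
  constructor
  · rintro ⟨g, h⟩ ⟨g', h'⟩ heq
    have key : ∀ x, glue L g h x = glue L g' h' x := fun x =>
      DFunLike.congr_fun (congrArg Subtype.val heq) x
    refine Prod.ext ?_ ?_
    · ext ⟨x, hx⟩
      simpa [glue_of_mem, hx, Sum.inlₗ] using key x
    · ext ⟨x, hx⟩
      simpa [glue_of_notMem, hx, Sum.inrₗ] using key x
  · rintro ⟨f, rfl⟩
    have hl : ∀ x : {x // x ∈ leftPart f}, ∃ a, f x = Sum.inlₗ a := fun x =>
      (Sum.isLeft_iff.1 ((mem_leftPart f x).1 x.2))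
    have hr : ∀ x : {x // x ∉ leftPart f}, ∃ b, f x = Sum.inrₗ b := fun x =>
      (Sum.isRight_iff.1 (Sum.not_isLeft.1 (fun h => x.2 ((mem_leftPart f x).2 h))))
    choose g hg using hl
    choose h hh using hr
    refine ⟨(⟨g, fun x y hxy => ?_⟩, ⟨h, fun x y hxy => ?_⟩), ?_⟩
    · have := f.monotone (show (x : P) ≤ y from hxy)
      rw [hg, hg] at this
      exact Sum.Lex.inl_le_inl_iff.1 this
    · have := f.monotone (show (x : P) ≤ y from hxy)
      rw [hh, hh] at this
      exact Sum.Lex.inr_le_inr_iff.1 this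
    · apply Subtype.ext
      apply OrderHom.ext
      funext x
      by_cases hx : x ∈ leftPart f
      · exact (glue_of_mem _ _ _ hx).trans (hg ⟨x, hx⟩).symm
      · exact (glue_of_notMem _ _ _ hx).trans (hh ⟨x, hx⟩).symm

theorem finite_orderHom (P Q : Type) [PartialOrder P] [PartialOrder Q] [Finite P] [Finite Q] :
    Finite (P →o Q) := DFunLike.finite _

theorem card_hom_sumLex (P A B : Type) [PartialOrder P] [PartialOrder A] [PartialOrder B]
    [Finite P] [Finite A] [Finite B] [Fintype (LowerSet P)] :
    Nat.card (P →o A ⊕ₗ B) =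
      ∑ L : LowerSet P, Nat.card ({x // x ∈ L} →o A) * Nat.card ({x // x ∉ L} →o B) := by
  have : Finite (A ⊕ₗ B) := inferInstanceAs (Finite (A ⊕ B))
  have := finite_orderHom P (A ⊕ₗ B)
  rw [← Nat.card_congr (Equiv.sigmaFiberEquiv (leftPart : (P →o A ⊕ₗ B) → LowerSet P)),
    Nat.card_sigma]
  refine Finset.sum_congr rfl fun L _ => ?_
  rw [← Nat.card_prod]
  exact (Nat.card_congr (Equiv.ofBijective _ (glue_bijective L))).symm

/-- The defining inequality of `Sqsub` also holds for the empty poset, where both sides are `1`. -/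
theorem Sqsub.card_le {R S : Type} [PartialOrder R] [PartialOrder S] (h : Sqsub R S)
    (P : Type) [PartialOrder P] [Finite P] : Nat.card (P →o R) ≤ Nat.card (P →o S) := by
  cases isEmpty_or_nonempty P with
  | inr _ => exact h P
  | inl _ =>
    have hc : ∀ (Q : Type) [PartialOrder Q], Nat.card (P →o Q) = 1 := fun Q _ => by
      rw [Nat.card_eq_one_iff_unique]
      exact ⟨⟨fun f g => OrderHom.ext _ _ (funext fun x => isEmptyElim x)⟩,
        ⟨⟨isEmptyElim, fun x => isEmptyElim x⟩⟩⟩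
    rw [hc, hc]

/-- Compatibility of `⊑` with ordinal sums: the ordinal sum `A ⊕ B` of two posets with
disjoint carriers is modelled by the lexicographic sum type `A ⊕ₗ B`. -/
theorem stmt5 (R₁ R₂ S₁ S₂ : Type)
    [PartialOrder R₁] [Finite R₁] [Nonempty R₁] [PartialOrder R₂] [Finite R₂] [Nonempty R₂]
    [PartialOrder S₁] [Finite S₁] [Nonempty S₁] [PartialOrder S₂] [Finite S₂] [Nonempty S₂]
    (h₁ : Sqsub R₁ S₁) (h₂ : Sqsub R₂ S₂) :
    Sqsub (R₁ ⊕ₗ R₂) (S₁ ⊕ₗ S₂) := by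
  intro P _ _ _
  have : Finite (LowerSet P) := Finite.of_injective _ (SetLike.coe_injective (A := LowerSet P))
  have := Fintype.ofFinite (LowerSet P)
  rw [card_hom_sumLex, card_hom_sumLex]
  exact Finset.sum_le_sum fun L _ => Nat.mul_le_mul (h₁.card_le _) (h₂.card_le _)
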